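/- Let C₀ > 0. There exists δ₀ > 0 such that for every δ ∈ (0, δ₀), every k ∈ {1,2}, every z ∈ K, and every (ζ', t̂) ≠ (0,0) with |t̂'| ≤ C₀ t̂_{ξd}: if μ̂_k(z,ζ',t̂) ≥ −δ λ̂⁴, then m̂_k(z,ζ',t̂) ≠ 0, i.e. the quadratic X ↦ (X + i t̂_{ξd})² + m̂_k has two distinct (simple) roots. -/

import Mathlib

/-- `m̂_k(z,ζ',t̂) = (-1)^k i (σ + i t̂_σ)² + r_z(ξ' + i t̂_{ξ'})`, where `r_z` is the
complex-bilinear extension of the quadratic form with coefficient matrix `R`. -/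
noncomputable def mhat {n : ℕ} (R : Fin n → Fin n → ℝ) (k : ℕ)
    (σ : ℝ) (ξ : Fin n → ℝ) (tσ : ℝ) (tξ : Fin n → ℝ) : ℂ :=
  (-1 : ℂ) ^ k * Complex.I * ((σ : ℂ) + Complex.I * (tσ : ℂ)) ^ 2 +
    ∑ j, ∑ l, (R j l : ℂ) * ((ξ j : ℂ) + Complex.I * (tξ j : ℂ)) *
      ((ξ l : ℂ) + Complex.I * (tξ l : ℂ))

/-- `μ̂_k = 4 t̂_{ξd}² Re m̂_k − 4 t̂_{ξd}⁴ + (Im m̂_k)²`. -/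
noncomputable def muhat {n : ℕ} (R : Fin n → Fin n → ℝ) (k : ℕ)
    (σ : ℝ) (ξ : Fin n → ℝ) (tσ : ℝ) (tξ : Fin n → ℝ) (tξd : ℝ) : ℝ :=
  4 * tξd ^ 2 * (mhat R k σ ξ tσ tξ).re - 4 * tξd ^ 4 + (mhat R k σ ξ tσ tξ).im ^ 2

/-! If `m̂_k` vanishes, then `λ̂² ≤ D t̂_{ξd}²`: at real covectors `m̂_k` is elliptic,
`|m̂_k(ζ')| ≥ e |ζ'|²`, and the imaginary shift `i t̂'` perturbs it only by
`O(|ζ'| |t̂'| + |t̂'|²)`, so a zero forces `|ζ'| ≲ |t̂'| ≲ t̂_{ξd}`. At such a zero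
`μ̂_k = -4 t̂_{ξd}⁴ ≤ -(4 / D²) λ̂⁴`, so `δ₀ = 4 / D²` works. -/

open Matrix

section Quadratic

variable {ι κ : Type*} [Fintype ι] [Fintype κ]

lemma sum_norm_le_sqrt_card_mul_sqrt {E : Type*} [SeminormedAddCommGroup E] (u : ι → E) :
    ∑ j, ‖u j‖ ≤ √(Fintype.card ι) * √(∑ j, ‖u j‖ ^ 2) := by
  rw [← Real.sqrt_mul (Nat.cast_nonneg _)]
  exact Real.le_sqrt_of_sq_le sq_sum_le_card_mul_sum_sq

lemma norm_dotProduct_mulVec_le_mul_sum {α : Type*} [NonUnitalSeminormedRing α]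
    {A : Matrix ι κ α} {M : ℝ} (hA : ∀ i j, ‖A i j‖ ≤ M) (u : ι → α) (v : κ → α) :
    ‖u ⬝ᵥ A *ᵥ v‖ ≤ M * ((∑ i, ‖u i‖) * ∑ j, ‖v j‖) := by
  calc ‖u ⬝ᵥ A *ᵥ v‖ ≤ ∑ i, ∑ j, ‖u i‖ * (M * ‖v j‖) := by
        simp only [dotProduct, mulVec, Finset.mul_sum]
        refine norm_sum_le_of_le _ fun i _ => norm_sum_le_of_le _ fun j _ => ?_
        calc ‖u i * (A i j * v j)‖ ≤ ‖u i‖ * (‖A i j‖ * ‖v j‖) :=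
              (norm_mul_le _ _).trans (by gcongr; exact norm_mul_le _ _)
          _ ≤ ‖u i‖ * (M * ‖v j‖) := by gcongr; exact hA i j
    _ = M * ((∑ i, ‖u i‖) * ∑ j, ‖v j‖) := by
        simp only [← Finset.mul_sum, ← Finset.sum_mul]
        ring

lemma norm_ofReal_dotProduct_mulVec_le {A : Matrix ι ι ℂ} {M : ℝ}
    (hA : ∀ i j, ‖A i j‖ ≤ M) (x y : ι → ℝ) :
    ‖(fun j => (x j : ℂ)) ⬝ᵥ A *ᵥ fun j => (y j : ℂ)‖ ≤
      M * Fintype.card ι * (√(∑ j, x j ^ 2) * √(∑ j, y j ^ 2)) := by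
  have sum_le (w : ι → ℝ) :
      ∑ j, ‖(w j : ℂ)‖ ≤ √(Fintype.card ι) * √(∑ j, w j ^ 2) := by
    simpa using sum_norm_le_sqrt_card_mul_sqrt w
  obtain _ | ⟨⟨i⟩⟩ := isEmpty_or_nonempty ι
  · simp
  have hM : 0 ≤ M := (norm_nonneg _).trans (hA i i)
  calc ‖(fun j => (x j : ℂ)) ⬝ᵥ A *ᵥ fun j => (y j : ℂ)‖
      ≤ M * ((∑ j, ‖(x j : ℂ)‖) * ∑ j, ‖(y j : ℂ)‖) := norm_dotProduct_mulVec_le_mul_sum hA _ _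
    _ ≤ M * ((√(Fintype.card ι) * √(∑ j, x j ^ 2)) *
          (√(Fintype.card ι) * √(∑ j, y j ^ 2))) := by
        gcongr
        exacts [sum_le x, sum_le y]
    _ = M * (√(Fintype.card ι) * √(Fintype.card ι)) *
          (√(∑ j, x j ^ 2) * √(∑ j, y j ^ 2)) := by ring
    _ = M * Fintype.card ι * (√(∑ j, x j ^ 2) * √(∑ j, y j ^ 2)) := by
        rw [Real.mul_self_sqrt (Nat.cast_nonneg _)]

lemma add_I_smul_dotProduct_mulVec_self (A : Matrix ι ι ℂ) (u v : ι → ℂ) :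
    (u + Complex.I • v) ⬝ᵥ A *ᵥ (u + Complex.I • v) =
      u ⬝ᵥ A *ᵥ u - v ⬝ᵥ A *ᵥ v + Complex.I * (u ⬝ᵥ A *ᵥ v + v ⬝ᵥ A *ᵥ u) := by
  simp only [mulVec_add, mulVec_smul, dotProduct_add, add_dotProduct, dotProduct_smul,
    smul_dotProduct, smul_eq_mul]
  linear_combination (v ⬝ᵥ A *ᵥ v) * Complex.I_sq

lemma sq_le_of_mul_sq_le {e L a b : ℝ} (he : 0 < e) (h : e * a ^ 2 ≤ L * (2 * (a * b) + b ^ 2)) :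
    a ^ 2 ≤ (2 * L / e + (2 * L / e) ^ 2) * b ^ 2 := by
  have hdiv : a ^ 2 ≤ 2 * L / e * (a * b) + 2 * L / e * b ^ 2 / 2 := by
    refine le_of_mul_le_mul_left (h.trans_eq ?_) he
    field_simp
  linarith [sq_nonneg (a - 2 * L / e * b)]

lemma sum_sq_le_of_elliptic_of_dotProduct_mulVec_eq_zero {A : Matrix ι ι ℂ} {M e : ℝ}
    (hA : ∀ i j, ‖A i j‖ ≤ M) (he : 0 < e) {x y : ι → ℝ}
    (hell : e * ∑ j, x j ^ 2 ≤ ‖(fun j => (x j : ℂ)) ⬝ᵥ A *ᵥ fun j => (x j : ℂ)‖)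
    (hzero : (fun j => (x j + Complex.I * y j : ℂ)) ⬝ᵥ
      A *ᵥ (fun j => (x j + Complex.I * y j : ℂ)) = 0) :
    ∑ j, x j ^ 2 ≤ (2 * (M * Fintype.card ι) / e + (2 * (M * Fintype.card ι) / e) ^ 2) *
      ∑ j, y j ^ 2 := by
  set u : ι → ℂ := fun j => x j
  set v : ι → ℂ := fun j => y j
  have hbound := norm_ofReal_dotProduct_mulVec_le hA
  have hsplit : u ⬝ᵥ A *ᵥ u = v ⬝ᵥ A *ᵥ v - Complex.I * (u ⬝ᵥ A *ᵥ v + v ⬝ᵥ A *ᵥ u) := by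
    linear_combination hzero - add_I_smul_dotProduct_mulVec_self A u v
  have hperturb : ‖u ⬝ᵥ A *ᵥ u‖ ≤
      ‖v ⬝ᵥ A *ᵥ v‖ + (‖u ⬝ᵥ A *ᵥ v‖ + ‖v ⬝ᵥ A *ᵥ u‖) := by
    rw [hsplit]
    refine (norm_sub_le _ _).trans ?_
    rw [norm_mul, Complex.norm_I, one_mul]
    gcongr
    exact norm_add_le _ _
  have hx : √(∑ j, x j ^ 2) ^ 2 = ∑ j, x j ^ 2 := Real.sq_sqrt (by positivity)
  have hy : √(∑ j, y j ^ 2) ^ 2 = ∑ j, y j ^ 2 := Real.sq_sqrt (by positivity)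
  rw [← hx] at hell
  rw [← hx, ← hy]
  refine sq_le_of_mul_sq_le he ?_
  linarith [hbound y y, hbound x y, hbound y x]

end Quadratic

section Symbol

variable {n : ℕ}

/-- The coefficient matrix of the quadratic polynomial `(σ, ξ') ↦ (-1)^k i σ² + r(ξ')`, with the
variable `σ` indexed by `Unit`; `mhat` is its value at `ζ' + i t̂'`. -/
noncomputable def symbolMatrix (R : Fin n → Fin n → ℝ) (k : ℕ) :
    Matrix (Unit ⊕ Fin n) (Unit ⊕ Fin n) ℂ :=
  fromBlocks (of fun _ _ => (-1) ^ k * Complex.I) 0 0 (of fun j l => (R j l : ℂ))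

lemma norm_symbolMatrix_le {R : Fin n → Fin n → ℝ} {M : ℝ} (hR : ∀ j l, |R j l| ≤ M) (k : ℕ)
    (i j : Unit ⊕ Fin n) : ‖symbolMatrix R k i j‖ ≤ max M 1 := by
  rcases i with _ | i <;> rcases j with _ | j <;> simp [symbolMatrix, hR]

lemma dotProduct_symbolMatrix_mulVec_self (R : Fin n → Fin n → ℝ) (k : ℕ)
    (w : Unit ⊕ Fin n → ℂ) :
    w ⬝ᵥ symbolMatrix R k *ᵥ w = (-1) ^ k * Complex.I * w (.inl ()) ^ 2 +
      ∑ j, ∑ l, (R j l : ℂ) * w (.inr j) * w (.inr l) := by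
  simp only [symbolMatrix, dotProduct, mulVec, Fintype.sum_sum_type, Finset.univ_unique,
    Finset.sum_singleton, PUnit.default_eq_unit, fromBlocks_apply₁₁, fromBlocks_apply₁₂,
    fromBlocks_apply₂₁, fromBlocks_apply₂₂, of_apply, Matrix.zero_apply, zero_mul,
    Finset.sum_const_zero, add_zero, zero_add, Finset.mul_sum]
  congr 1
  · ring
  · exact Finset.sum_congr rfl fun j _ => Finset.sum_congr rfl fun l _ => by ring

lemma mhat_eq_dotProduct_symbolMatrix_mulVec (R : Fin n → Fin n → ℝ) (k : ℕ)
    (x y : Unit ⊕ Fin n → ℝ) :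
    mhat R k (x (.inl ())) (fun j => x (.inr j)) (y (.inl ())) (fun j => y (.inr j)) =
      (fun j => (x j + Complex.I * y j : ℂ)) ⬝ᵥ
        symbolMatrix R k *ᵥ (fun j => (x j + Complex.I * y j : ℂ)) := by
  rw [dotProduct_symbolMatrix_mulVec_self, mhat]

lemma mul_sum_sq_le_norm_dotProduct_symbolMatrix_mulVec {R : Fin n → Fin n → ℝ} {c : ℝ}
    (hpd : ∀ η : Fin n → ℝ, c * ∑ j, η j ^ 2 ≤ ∑ j, ∑ l, R j l * η j * η l) (k : ℕ)
    (x : Unit ⊕ Fin n → ℝ) :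
    min 1 c / 2 * ∑ j, x j ^ 2 ≤
      ‖(fun j => (x j : ℂ)) ⬝ᵥ symbolMatrix R k *ᵥ fun j => (x j : ℂ)‖ := by
  set σ := x (.inl ())
  set r := ∑ j, ∑ l, R j l * x (.inr j) * x (.inr l)
  set w := (fun j => (x j : ℂ)) ⬝ᵥ symbolMatrix R k *ᵥ (fun j => (x j : ℂ))
  have hw : w = ⟨r, (-1) ^ k * σ ^ 2⟩ := by
    simp only [w, r, σ, dotProduct_symbolMatrix_mulVec_self, Complex.mk_eq_add_mul_I]
    push_cast
    ring
  have hre : r ≤ ‖w‖ := by simpa only [hw] using Complex.re_le_norm w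
  have him : σ ^ 2 ≤ ‖w‖ := by simpa [hw, abs_mul] using Complex.abs_im_le_norm w
  have hσ : min 1 c * σ ^ 2 ≤ σ ^ 2 :=
    mul_le_of_le_one_left (sq_nonneg σ) (min_le_left 1 c)
  have hξ : min 1 c * ∑ j, x (.inr j) ^ 2 ≤ r :=
    (mul_le_mul_of_nonneg_right (min_le_right 1 c) (by positivity)).trans (hpd _)
  rw [Fintype.sum_sum_type, Fintype.sum_unique]
  linarith

lemma exists_sum_sq_le_of_mhat_eq_zero {c : ℝ} (hc : 0 < c) (n : ℕ) (M : ℝ) :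
    ∃ Q ≥ 0, ∀ R : Fin n → Fin n → ℝ, (∀ j l, |R j l| ≤ M) →
      (∀ η : Fin n → ℝ, c * ∑ j, η j ^ 2 ≤ ∑ j, ∑ l, R j l * η j * η l) →
      ∀ (k : ℕ) (σ : ℝ) (ξ : Fin n → ℝ) (tσ : ℝ) (tξ : Fin n → ℝ), mhat R k σ ξ tσ tξ = 0 →
        σ ^ 2 + ∑ j, ξ j ^ 2 ≤ Q * (tσ ^ 2 + ∑ j, tξ j ^ 2) := by
  set q : ℝ := 2 * (max M 1 * Fintype.card (Unit ⊕ Fin n)) / (min 1 c / 2)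
  have he : 0 < min 1 c / 2 := by positivity
  refine ⟨q + q ^ 2, by positivity, fun R hR hpd k σ ξ tσ tξ hzero => ?_⟩
  set x : Unit ⊕ Fin n → ℝ := Sum.elim (fun _ => σ) ξ
  set y : Unit ⊕ Fin n → ℝ := Sum.elim (fun _ => tσ) tξ
  have key := sum_sq_le_of_elliptic_of_dotProduct_mulVec_eq_zero (norm_symbolMatrix_le hR k) he
    (mul_sum_sq_le_norm_dotProduct_symbolMatrix_mulVec hpd k x)
    ((mhat_eq_dotProduct_symbolMatrix_mulVec R k x y).symm.trans hzero)
  simpa only [x, y, Fintype.sum_sum_type, Fintype.sum_unique, Sum.elim_inl, Sum.elim_inr] using key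

lemma covector_normSq_pos {σ tσ tξd : ℝ} {ξ tξ : Fin n → ℝ}
    (hne : ¬ (σ = 0 ∧ ξ = 0 ∧ tσ = 0 ∧ tξ = 0 ∧ tξd = 0)) :
    0 < tσ ^ 2 + (∑ j, tξ j ^ 2) + tξd ^ 2 + (σ ^ 2 + ∑ j, ξ j ^ 2) := by
  have eq_zero_of_sum_sq {η : Fin n → ℝ} (h : ∑ j, η j ^ 2 = 0) : η = 0 := by
    simpa [Finset.sum_eq_zero_iff_of_nonneg, sq_nonneg, funext_iff] using h
  contrapose! hne
  have hξ : 0 ≤ ∑ j, ξ j ^ 2 := by positivity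
  have htξ : 0 ≤ ∑ j, tξ j ^ 2 := by positivity
  refine ⟨pow_eq_zero_iff two_ne_zero |>.1 ?_, eq_zero_of_sum_sq ?_,
    pow_eq_zero_iff two_ne_zero |>.1 ?_, eq_zero_of_sum_sq ?_,
    pow_eq_zero_iff two_ne_zero |>.1 ?_⟩ <;>
  linarith [sq_nonneg σ, sq_nonneg tσ, sq_nonneg tξd]

lemma muhat_of_mhat_eq_zero {R : Fin n → Fin n → ℝ} {k : ℕ} {σ tσ : ℝ} {ξ tξ : Fin n → ℝ}
    (h : mhat R k σ ξ tσ tξ = 0) (tξd : ℝ) : muhat R k σ ξ tσ tξ tξd = -4 * tξd ^ 4 := by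
  simp [muhat, h]

end Symbol

theorem stmt12_general (n : ℕ) (M c : ℝ) (hc : 0 < c) (C₀ : ℝ) :
    ∃ δ₀ > 0, ∀ R : Fin n → Fin n → ℝ, (∀ j l, |R j l| ≤ M) →
      (∀ η : Fin n → ℝ, c * (∑ j, (η j) ^ 2) ≤ ∑ j, ∑ l, R j l * η j * η l) →
      ∀ δ < δ₀, ∀ (k : ℕ) (σ : ℝ) (ξ : Fin n → ℝ) (tσ : ℝ) (tξ : Fin n → ℝ) (tξd : ℝ),
        ¬ (σ = 0 ∧ ξ = 0 ∧ tσ = 0 ∧ tξ = 0 ∧ tξd = 0) →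
        Real.sqrt (tσ ^ 2 + ∑ j, (tξ j) ^ 2) ≤ C₀ * tξd →
        -δ * (Real.sqrt ((tσ ^ 2 + (∑ j, (tξ j) ^ 2) + tξd ^ 2) +
            (σ ^ 2 + ∑ j, (ξ j) ^ 2))) ^ 4 ≤ muhat R k σ ξ tσ tξ tξd →
        mhat R k σ ξ tσ tξ ≠ 0 := by
  obtain ⟨Q, hQ, hzeros⟩ := exists_sum_sq_le_of_mhat_eq_zero hc n M
  set D := (1 + Q) * C₀ ^ 2 + 1
  have hD : 0 < D := by positivity
  refine ⟨4 / D ^ 2, by positivity, fun R hR hpd δ hδ k σ ξ tσ tξ tξd hne hcone hμ hzero => ?_⟩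
  have hpos := covector_normSq_pos hne
  have hζ := hzeros R hR hpd k σ ξ tσ tξ hzero
  have ht : tσ ^ 2 + ∑ j, tξ j ^ 2 ≤ C₀ ^ 2 * tξd ^ 2 := by
    simpa only [mul_pow] using (Real.sqrt_le_iff.1 hcone).2
  rw [muhat_of_mhat_eq_zero hzero, show √_ ^ 4 = (√_ ^ 2) ^ 2 from pow_mul _ 2 2,
    Real.sq_sqrt hpos.le] at hμ
  set lamSq := tσ ^ 2 + (∑ j, tξ j ^ 2) + tξd ^ 2 + (σ ^ 2 + ∑ j, ξ j ^ 2)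
  have hlam : lamSq ≤ D * tξd ^ 2 := by
    have := mul_le_mul_of_nonneg_left ht (by positivity : 0 ≤ 1 + Q)
    simp only [lamSq, D]
    linarith
  have hcontra : δ * lamSq ^ 2 < 4 * tξd ^ 4 :=
    calc δ * lamSq ^ 2 < 4 / D ^ 2 * lamSq ^ 2 := by gcongr
      _ ≤ 4 / D ^ 2 * (D * tξd ^ 2) ^ 2 := by gcongr
      _ = 4 * tξd ^ 4 := by field_simp
  linarith

/-- If `|t̂'| ≤ C₀ t̂_{ξd}` and `μ̂_k ≥ −δ λ̂⁴` with `δ` small, then `m̂_k ≠ 0`, i.e. the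
roots of `X ↦ (X + i t̂_{ξd})² + m̂_k` are simple. -/
theorem stmt12 (n : ℕ) (K : Type*) [MetricSpace K] [CompactSpace K]
    (R : K → Fin n → Fin n → ℝ)
    (hRcont : ∀ j l, Continuous fun z => R z j l)
    (c : ℝ) (hc : 0 < c)
    (hpd : ∀ (z : K) (η : Fin n → ℝ), c * (∑ j, (η j) ^ 2) ≤ ∑ j, ∑ l, R z j l * η j * η l)
    (C₀ : ℝ) (hC₀ : 0 < C₀) :
    ∃ δ₀ > 0, ∀ δ : ℝ, 0 < δ → δ < δ₀ →
      ∀ k : ℕ, k = 1 ∨ k = 2 →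
      ∀ (z : K) (σ : ℝ) (ξ : Fin n → ℝ) (tσ : ℝ) (tξ : Fin n → ℝ) (tξd : ℝ),
        ¬ (σ = 0 ∧ ξ = 0 ∧ tσ = 0 ∧ tξ = 0 ∧ tξd = 0) →
        Real.sqrt (tσ ^ 2 + ∑ j, (tξ j) ^ 2) ≤ C₀ * tξd →
        -δ * (Real.sqrt ((tσ ^ 2 + (∑ j, (tξ j) ^ 2) + tξd ^ 2) +
            (σ ^ 2 + ∑ j, (ξ j) ^ 2))) ^ 4 ≤ muhat (R z) k σ ξ tσ tξ tξd →
        mhat (R z) k σ ξ tσ tξ ≠ 0 := by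
  obtain ⟨M, hM⟩ := isCompact_univ.exists_bound_of_continuousOn
    (continuous_pi fun j => continuous_pi (hRcont j)).continuousOn
  have hR (z : K) (j l : Fin n) : |R z j l| ≤ M :=
    (norm_le_pi_norm (R z j) l).trans <| (norm_le_pi_norm (R z) j).trans (hM z (Set.mem_univ z))
  obtain ⟨δ₀, hδ₀, hmain⟩ := stmt12_general n M c hc C₀
  exact ⟨δ₀, hδ₀, fun δ _ hδ k _ z => hmain (R z) (hR z) (hpd z) δ hδ k⟩
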